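/- Let a < b be real numbers and 0 < α < 1. If f and g are absolutely continuous on [a,b], then ∫_a^b g(x)·(C_aD_x^α f)(x) dx = [f(x)·(xI_b^{1−α} g)(x)]_{x=a}^{x=b} + ∫_a^b f(x)·(xD_b^α g)(x) dx, where the right Riemann–Liouville fractional derivative xD_b^α g exists almost everywhere and the boundary term denotes the difference of the values at x = b and x = a. -/

import Mathlib

/-!
Both sides become `∫ f' · ₓI_b^{1-α} g`, up to the boundary term: the left one by exchanging the
order of integration over the triangle `t ≤ x`, the right one by ordinary integration by parts.
The latter needs `ₓI_b^{1-α} g` to be absolutely continuous. For any integrable kernel `k`, write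
`g t = g b - ∫_t^b g'`; since convolution with `k` commutes with the tail integral `∫_t^b`
(Fubini on the triangle, twice),
`∫_x^b k (t - x) g(t) dt = ∫_x^b (k (b - u) g(b) - ∫_u^b k (v - u) g'(v) dv) du`,
which is the tail integral of an integrable function.
-/

open MeasureTheory Set Real

noncomputable section

/-- Left Riemann–Liouville fractional integral `(ₐIₓ^α f)(x)`. -/
def leftRLI (a α : ℝ) (f : ℝ → ℝ) (x : ℝ) : ℝ :=
  (1 / Real.Gamma α) * ∫ t in a..x, (x - t) ^ (α - 1) * f t

/-- Right Riemann–Liouville fractional integral `(ₓI_b^α f)(x)`. -/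
def rightRLI (b α : ℝ) (f : ℝ → ℝ) (x : ℝ) : ℝ :=
  (1 / Real.Gamma α) * ∫ t in x..b, (t - x) ^ (α - 1) * f t

/-- A function is absolutely continuous on `[a, b]` iff it is the integral of its
(almost everywhere defined) derivative. -/
def AbsolutelyContinuousOn (f : ℝ → ℝ) (a b : ℝ) : Prop :=
  IntervalIntegrable (deriv f) volume a b ∧
    ∀ x ∈ Icc a b, f x = f a + ∫ t in a..x, deriv f t

/-- Left Caputo fractional derivative `(ᶜₐDₓ^α f)(x)`. -/
def caputoLeft (a α : ℝ) (f : ℝ → ℝ) (x : ℝ) : ℝ :=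
  (1 / Real.Gamma (1 - α)) * ∫ t in a..x, (x - t) ^ (-α) * deriv f t

/-- Right Caputo fractional derivative `(ᶜₓD_b^α f)(x)`. -/
def caputoRight (b α : ℝ) (f : ℝ → ℝ) (x : ℝ) : ℝ :=
  -(1 / Real.Gamma (1 - α)) * ∫ t in x..b, (t - x) ^ (-α) * deriv f t

/-- Left Riemann–Liouville fractional derivative `(ₐDₓ^α g)(x) = d/dx (ₐIₓ^{1-α} g)(x)`. -/
def rlLeftD (a α : ℝ) (g : ℝ → ℝ) (x : ℝ) : ℝ :=
  deriv (leftRLI a (1 - α) g) x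

/-- Right Riemann–Liouville fractional derivative `(ₓD_b^α g)(x) = -d/dx (ₓI_b^{1-α} g)(x)`. -/
def rlRightD (b α : ℝ) (g : ℝ → ℝ) (x : ℝ) : ℝ :=
  -deriv (rightRLI b (1 - α) g) x

/-- Combined Caputo fractional derivative `ᶜD_γ^{α,β} f = γ ᶜₐDₓ^α f + (1-γ) ᶜₓD_b^β f`. -/
def combCaputo (a b α β γ : ℝ) (f : ℝ → ℝ) (x : ℝ) : ℝ :=
  γ * caputoLeft a α f x + (1 - γ) * caputoRight b β f x

/-- Combined Riemann–Liouville derivative `D_{1-γ}^{β,α} g = (1-γ) ₐDₓ^β g + γ ₓD_b^α g`. -/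
def combRL (a b α β γ : ℝ) (g : ℝ → ℝ) (x : ℝ) : ℝ :=
  (1 - γ) * rlLeftD a β g x + γ * rlRightD b α g x

/-- Componentwise combined Caputo derivative of a vector-valued function. -/
def combCaputoVec (a b α β γ : ℝ) {N : ℕ} (y : ℝ → Fin N → ℝ) (x : ℝ) : Fin N → ℝ :=
  fun i => combCaputo a b α β γ (fun t => y t i) x

/-- The class `𝐃` of trajectories: each component absolutely continuous on `[a,b]` and the
combined Caputo derivative exists and is continuous on `[a,b]`. -/
def memD (a b α β γ : ℝ) {N : ℕ} (y : ℝ → Fin N → ℝ) : Prop :=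
  (∀ i, AbsolutelyContinuousOn (fun t => y t i) a b) ∧
    ∀ i, ContinuousOn (fun x => combCaputo a b α β γ (fun t => y t i) x) (Icc a b)

/-- The norm `‖y‖_{1,∞} = max_{[a,b]} ‖y(x)‖ + max_{[a,b]} ‖ᶜD_γ^{α,β} y(x)‖`. -/
def norm1inf (a b α β γ : ℝ) {N : ℕ} (y : ℝ → Fin N → ℝ) : ℝ :=
  sSup ((fun x => ‖y x‖) '' Icc a b) +
    sSup ((fun x => ‖combCaputoVec a b α β γ y x‖) '' Icc a b)

/-- Partial derivative of a Lagrangian `L(x, y, v)` w.r.t. the `i`-th component of `y`. -/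
def pdY {N : ℕ} (L : ℝ → (Fin N → ℝ) → (Fin N → ℝ) → ℝ) (i : Fin N) (x : ℝ)
    (u v : Fin N → ℝ) : ℝ :=
  deriv (fun s => L x (Function.update u i s) v) (u i)

/-- Partial derivative of a Lagrangian `L(x, y, v)` w.r.t. the `i`-th component of `v`. -/
def pdV {N : ℕ} (L : ℝ → (Fin N → ℝ) → (Fin N → ℝ) → ℝ) (i : Fin N) (x : ℝ)
    (u v : Fin N → ℝ) : ℝ :=
  deriv (fun s => L x u (Function.update v i s)) (v i)

theorem memLp_top_restrict_of_continuousOn {X E : Type*} [TopologicalSpace X] [T2Space X]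
    [MeasurableSpace X] [OpensMeasurableSpace X] [NormedAddCommGroup E] {μ : Measure X} {K : Set X}
    {f : X → E} (hK : IsCompact K) (hf : ContinuousOn f K) : MemLp f ⊤ (μ.restrict K) := by
  obtain ⟨C, hC⟩ := hK.exists_bound_of_continuousOn hf
  exact memLp_top_of_bound (hf.aestronglyMeasurable_of_isCompact hK hK.measurableSet) C
    (ae_restrict_of_forall_mem hK.measurableSet hC)

theorem integrable_indicator_Icc_of_intervalIntegrable {E : Type*} [NormedAddCommGroup E]
    {f : ℝ → E} {a b : ℝ} (hf : IntervalIntegrable f volume a b) :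
    Integrable ((Icc a b).indicator f) :=
  (integrable_indicator_iff measurableSet_Icc).2
    ((integrableOn_Icc_iff_integrableOn_Ioc (by simp)).2 hf.1)

section AbsolutelyContinuous

variable {a b : ℝ}

theorem absolutelyContinuousOnInterval_congr {X : Type*} [PseudoMetricSpace X] {f g : ℝ → X}
    (hfg : EqOn f g (uIcc a b)) :
    AbsolutelyContinuousOnInterval f a b ↔ AbsolutelyContinuousOnInterval g a b := by
  refine Filter.tendsto_congr' (Filter.eventually_inf_principal.2 (.of_forall fun I hI => ?_))
  exact Finset.sum_congr rfl fun i hi => by rw [hfg (hI.1 i hi).1, hfg (hI.1 i hi).2]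

theorem absolutelyContinuousOnInterval_of_eq_add_integral {f φ : ℝ → ℝ} {c C : ℝ}
    (hφ : IntervalIntegrable φ volume a b) (hc : c ∈ uIcc a b)
    (hf : ∀ x ∈ uIcc a b, f x = C + ∫ t in c..x, φ t) :
    AbsolutelyContinuousOnInterval f a b := by
  have hconst : AbsolutelyContinuousOnInterval (fun _ => C) a b :=
    (LipschitzWith.const C).lipschitzOnWith.absolutelyContinuousOnInterval
  exact (absolutelyContinuousOnInterval_congr hf).2
    (hconst.add (hφ.absolutelyContinuousOnInterval_intervalIntegral hc))

theorem AbsolutelyContinuousOn.absolutelyContinuousOnInterval {f : ℝ → ℝ} (hab : a ≤ b)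
    (hf : AbsolutelyContinuousOn f a b) : AbsolutelyContinuousOnInterval f a b :=
  absolutelyContinuousOnInterval_of_eq_add_integral hf.1 left_mem_uIcc
    fun x hx => hf.2 x (by rwa [uIcc_of_le hab] at hx)

end AbsolutelyContinuous

section TriangleFubini

/-- The half-open triangle `a < s ≤ t ≤ b`, the domain of integration of the iterated integrals
`∫ s in a..b, ∫ t in s..b` and `∫ t in a..b, ∫ s in a..t`. -/
def upperTriangle (a b : ℝ) : Set (ℝ × ℝ) :=
  {p | a < p.1 ∧ p.1 ≤ p.2 ∧ p.2 ≤ b}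

theorem measurableSet_upperTriangle (a b : ℝ) : MeasurableSet (upperTriangle a b) :=
  (measurableSet_lt measurable_const measurable_fst).inter
    ((measurableSet_le measurable_fst measurable_snd).inter
      (measurableSet_le measurable_snd measurable_const))

theorem upperTriangle_subset_prod (a b : ℝ) : upperTriangle a b ⊆ Ioc a b ×ˢ Ioc a b :=
  fun _ ⟨h₁, h₂, h₃⟩ => ⟨⟨h₁, h₂.trans h₃⟩, h₁.trans_le h₂, h₃⟩

theorem sub_mem_Icc_of_mem_upperTriangle {a b : ℝ} {p : ℝ × ℝ} (hp : p ∈ upperTriangle a b) :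
    p.2 - p.1 ∈ Icc 0 (b - a) :=
  ⟨sub_nonneg.2 hp.2.1, sub_le_sub hp.2.2 hp.1.le⟩

variable {E : Type*} [NormedAddCommGroup E] [NormedSpace ℝ E] {a b : ℝ} {F : ℝ → ℝ → E}

theorem integral_indicator_upperTriangle_right (a b : ℝ) (F : ℝ → ℝ → E) (s : ℝ) :
    ∫ t, (upperTriangle a b).indicator (Function.uncurry F) (s, t) =
      (Ioc a b).indicator (fun s => ∫ t in s..b, F s t) s := by
  by_cases hs : s ∈ Ioc a b
  · have hslice : (fun t => (upperTriangle a b).indicator (Function.uncurry F) (s, t)) =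
        (Icc s b).indicator (F s) := by
      ext t
      simp [indicator, upperTriangle, hs.1]
    rw [hslice, integral_indicator measurableSet_Icc, integral_Icc_eq_integral_Ioc,
      indicator_of_mem hs, intervalIntegral.integral_of_le hs.2]
  · have hslice (t : ℝ) : (s, t) ∉ upperTriangle a b :=
      fun h => hs (upperTriangle_subset_prod a b h).1
    simp [hs, hslice]

theorem integral_indicator_upperTriangle_left (a b : ℝ) (F : ℝ → ℝ → E) (t : ℝ) :
    ∫ s, (upperTriangle a b).indicator (Function.uncurry F) (s, t) =
      (Ioc a b).indicator (fun t => ∫ s in a..t, F s t) t := by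
  by_cases ht : t ∈ Ioc a b
  · have hslice : (fun s => (upperTriangle a b).indicator (Function.uncurry F) (s, t)) =
        (Ioc a t).indicator fun s => F s t := by
      ext s
      simp [indicator, upperTriangle, ht.2]
    rw [hslice, integral_indicator measurableSet_Ioc, indicator_of_mem ht,
      intervalIntegral.integral_of_le ht.1.le]
  · have hslice (s : ℝ) : (s, t) ∉ upperTriangle a b :=
      fun h => ht (upperTriangle_subset_prod a b h).2
    simp [ht, hslice]

theorem intervalIntegrable_integral_upperTriangle (hab : a ≤ b)
    (hF : IntegrableOn (Function.uncurry F) (upperTriangle a b)) :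
    IntervalIntegrable (fun s => ∫ t in s..b, F s t) volume a b := by
  have hint := (integrable_indicator_iff (measurableSet_upperTriangle a b)).2 hF
  rw [intervalIntegrable_iff_integrableOn_Ioc_of_le hab,
    ← integrable_indicator_iff measurableSet_Ioc]
  exact hint.integral_prod_left.congr (.of_forall (integral_indicator_upperTriangle_right a b F))

theorem integral_integral_upperTriangle_swap (hab : a ≤ b)
    (hF : IntegrableOn (Function.uncurry F) (upperTriangle a b)) :
    ∫ s in a..b, ∫ t in s..b, F s t = ∫ t in a..b, ∫ s in a..t, F s t := by
  have hint := (integrable_indicator_iff (measurableSet_upperTriangle a b)).2 hF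
  rw [intervalIntegral.integral_of_le hab, intervalIntegral.integral_of_le hab,
    ← integral_indicator measurableSet_Ioc, ← integral_indicator measurableSet_Ioc]
  simp_rw [← integral_indicator_upperTriangle_right, ← integral_indicator_upperTriangle_left]
  exact integral_integral_swap hint

end TriangleFubini

section Volterra

/-- The Volterra convolution operator with kernel `k` based at the left endpoint `a`. For a
power kernel it is the left fractional integral up to the Gamma factor. -/
def leftVolterra (a : ℝ) (k f : ℝ → ℝ) (x : ℝ) : ℝ :=
  ∫ t in a..x, k (x - t) * f t

/-- The Volterra convolution operator with kernel `k` based at the right endpoint `b`, the formal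
adjoint of `leftVolterra`. -/
def rightVolterra (b : ℝ) (k f : ℝ → ℝ) (x : ℝ) : ℝ :=
  ∫ t in x..b, k (t - x) * f t

variable {a b : ℝ} {k f g : ℝ → ℝ}

theorem intervalIntegrable_comp_sub_left_endpoint (hk : IntervalIntegrable k volume 0 (b - a)) :
    IntervalIntegrable (fun t => k (t - a)) volume a b := by
  simpa using hk.comp_sub_right a

theorem intervalIntegrable_right_endpoint_sub (hk : IntervalIntegrable k volume 0 (b - a)) :
    IntervalIntegrable (fun t => k (b - t)) volume a b := by
  simpa using (hk.comp_sub_left b).symm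

theorem integral_comp_sub_left_endpoint_eq (k : ℝ → ℝ) (a b : ℝ) :
    ∫ t in a..b, k (t - a) = ∫ t in a..b, k (b - t) := by
  simp [intervalIntegral.integral_comp_sub_right, intervalIntegral.integral_comp_sub_left]

theorem integrableOn_upperTriangle_mul_comp_sub (hk : IntervalIntegrable k volume 0 (b - a))
    (hf : IntervalIntegrable f volume a b) :
    IntegrableOn (fun p : ℝ × ℝ => f p.1 * k (p.2 - p.1)) (upperTriangle a b) := by
  have hint := (measurePreserving_prod_sub volume volume).integrable_comp_of_integrable
    ((integrable_indicator_Icc_of_intervalIntegrable hf).mul_prod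
      (integrable_indicator_Icc_of_intervalIntegrable hk))
  refine hint.integrableOn.congr_fun (fun p hp => ?_) (measurableSet_upperTriangle a b)
  have hp₁ := Ioc_subset_Icc_self (upperTriangle_subset_prod a b hp).1
  simp [indicator_of_mem hp₁, indicator_of_mem (sub_mem_Icc_of_mem_upperTriangle hp)]

theorem integrableOn_upperTriangle_comp_sub_mul (hk : IntervalIntegrable k volume 0 (b - a))
    (hf : IntervalIntegrable f volume a b) :
    IntegrableOn (fun p : ℝ × ℝ => k (p.2 - p.1) * f p.2) (upperTriangle a b) := by
  have hint := (integrable_indicator_Icc_of_intervalIntegrable hf).convolution_integrand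
    (ContinuousLinearMap.mul ℝ ℝ) (integrable_indicator_Icc_of_intervalIntegrable hk).comp_neg
  refine hint.integrableOn.congr_fun (fun p hp => ?_) (measurableSet_upperTriangle a b)
  have hp₂ := Ioc_subset_Icc_self (upperTriangle_subset_prod a b hp).2
  simp [indicator_of_mem hp₂, indicator_of_mem (sub_mem_Icc_of_mem_upperTriangle hp), mul_comm]

theorem integral_mul_leftVolterra (hab : a ≤ b) (hk : IntervalIntegrable k volume 0 (b - a))
    (hf : IntervalIntegrable f volume a b) (hg : MemLp g ⊤ (volume.restrict (Ioc a b))) :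
    ∫ x in a..b, g x * leftVolterra a k f x = ∫ x in a..b, f x * rightVolterra b k g x := by
  have hg' : MemLp (fun p : ℝ × ℝ => g p.2) ⊤ (volume.restrict (upperTriangle a b)) := by
    refine MemLp.mono_measure (Measure.restrict_mono (upperTriangle_subset_prod a b) le_rfl) ?_
    rw [Measure.volume_eq_prod, ← Measure.prod_restrict]
    exact hg.comp_snd _
  have hint : IntegrableOn (Function.uncurry fun t x => g x * (f t * k (x - t)))
      (upperTriangle a b) :=
    Integrable.mul_of_top_right (integrableOn_upperTriangle_mul_comp_sub hk hf) hg'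
  calc ∫ x in a..b, g x * leftVolterra a k f x
      = ∫ x in a..b, ∫ t in a..x, g x * (f t * k (x - t)) := by
        simp_rw [leftVolterra, intervalIntegral.integral_const_mul, mul_comm (f _)]
    _ = ∫ t in a..b, ∫ x in t..b, g x * (f t * k (x - t)) :=
        (integral_integral_upperTriangle_swap hab hint).symm
    _ = ∫ t in a..b, f t * rightVolterra b k g t := by
        simp_rw [rightVolterra, ← intervalIntegral.integral_const_mul, mul_left_comm (g _),
          mul_comm (g _)]

theorem intervalIntegrable_rightVolterra (hab : a ≤ b)
    (hk : IntervalIntegrable k volume 0 (b - a)) (hf : IntervalIntegrable f volume a b) :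
    IntervalIntegrable (rightVolterra b k f) volume a b :=
  intervalIntegrable_integral_upperTriangle hab
    (F := fun u v => k (v - u) * f v) (integrableOn_upperTriangle_comp_sub_mul hk hf)

theorem rightVolterra_intervalIntegral (hab : a ≤ b) (hk : IntervalIntegrable k volume 0 (b - a))
    (hf : IntervalIntegrable f volume a b) :
    rightVolterra b k (fun t => ∫ v in t..b, f v) a = ∫ u in a..b, rightVolterra b k f u := by
  have hprod : IntegrableOn (Function.uncurry fun t v => k (t - a) * f v) (upperTriangle a b) := by
    refine IntegrableOn.mono_set ?_ (upperTriangle_subset_prod a b)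
    rw [IntegrableOn, Measure.volume_eq_prod, ← Measure.prod_restrict]
    exact (intervalIntegrable_comp_sub_left_endpoint hk).1.mul_prod hf.1
  calc rightVolterra b k (fun t => ∫ v in t..b, f v) a
      = ∫ t in a..b, ∫ v in t..b, k (t - a) * f v := by
        simp_rw [rightVolterra, intervalIntegral.integral_const_mul]
    _ = ∫ v in a..b, ∫ t in a..v, k (t - a) * f v :=
        integral_integral_upperTriangle_swap hab hprod
    _ = ∫ v in a..b, ∫ u in a..v, k (v - u) * f v := by
        simp_rw [intervalIntegral.integral_mul_const, integral_comp_sub_left_endpoint_eq]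
    _ = ∫ u in a..b, rightVolterra b k f u :=
        (integral_integral_upperTriangle_swap (F := fun u v => k (v - u) * f v) hab
          (integrableOn_upperTriangle_comp_sub_mul hk hf)).symm

theorem rightVolterra_eq_integral (hab : a ≤ b) (hk : IntervalIntegrable k volume 0 (b - a))
    (hg : AbsolutelyContinuousOnInterval g a b) :
    rightVolterra b k g a =
      ∫ u in a..b, (k (b - u) * g b - rightVolterra b k (deriv g) u) := by
  have htail : EqOn (fun t => ∫ v in t..b, deriv g v) (fun t => g b - g t) (uIcc a b) :=
    fun t ht => (hg.mono (uIcc_subset_uIcc_right ht)).integral_deriv_eq_sub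
  have hk' := intervalIntegrable_comp_sub_left_endpoint hk
  have htail_cont : ContinuousOn (fun t => ∫ v in t..b, deriv g v) (uIcc a b) :=
    (continuousOn_const.sub hg.continuousOn).congr htail
  calc rightVolterra b k g a
      = ∫ t in a..b, (k (t - a) * g b - k (t - a) * ∫ v in t..b, deriv g v) :=
        intervalIntegral.integral_congr fun t ht => by
          simp only [← mul_sub, htail ht, sub_sub_cancel]
    _ = (∫ t in a..b, k (t - a) * g b) -
          rightVolterra b k (fun t => ∫ v in t..b, deriv g v) a :=
        intervalIntegral.integral_sub (hk'.mul_const _) (hk'.mul_continuousOn htail_cont)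
    _ = (∫ u in a..b, k (b - u) * g b) - ∫ u in a..b, rightVolterra b k (deriv g) u := by
        rw [rightVolterra_intervalIntegral hab hk hg.intervalIntegrable_deriv,
          intervalIntegral.integral_mul_const, intervalIntegral.integral_mul_const,
          integral_comp_sub_left_endpoint_eq]
    _ = ∫ u in a..b, (k (b - u) * g b - rightVolterra b k (deriv g) u) :=
        (intervalIntegral.integral_sub ((intervalIntegrable_right_endpoint_sub hk).mul_const _)
          (intervalIntegrable_rightVolterra hab hk hg.intervalIntegrable_deriv)).symm

theorem absolutelyContinuousOnInterval_rightVolterra (hab : a ≤ b)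
    (hk : IntervalIntegrable k volume 0 (b - a)) (hg : AbsolutelyContinuousOnInterval g a b) :
    AbsolutelyContinuousOnInterval (rightVolterra b k g) a b := by
  refine absolutelyContinuousOnInterval_of_eq_add_integral (C := 0)
    (((intervalIntegrable_right_endpoint_sub hk).mul_const (g b)).sub
      (intervalIntegrable_rightVolterra hab hk hg.intervalIntegrable_deriv)).neg
    right_mem_uIcc fun x hx => ?_
  have hxb : uIcc x b ⊆ uIcc a b := uIcc_subset_uIcc_right hx
  rw [uIcc_of_le hab] at hx
  have hkx : IntervalIntegrable k volume 0 (b - x) := hk.mono_set (by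
    rw [uIcc_of_le (sub_nonneg.2 hx.2), uIcc_of_le (sub_nonneg.2 hab)]
    exact Icc_subset_Icc_right (sub_le_sub_left hx.1 b))
  rw [rightVolterra_eq_integral hx.2 hkx (hg.mono hxb), intervalIntegral.integral_symm, zero_add,
    ← intervalIntegral.integral_neg]
  rfl

end Volterra

section Fractional

variable {a b α : ℝ} {f g : ℝ → ℝ}

theorem leftRLI_eq_leftVolterra (a α : ℝ) (f : ℝ → ℝ) (x : ℝ) :
    leftRLI a α f x = 1 / Gamma α * leftVolterra a (fun s => s ^ (α - 1)) f x :=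
  rfl

theorem rightRLI_eq_rightVolterra (b α : ℝ) (f : ℝ → ℝ) (x : ℝ) :
    rightRLI b α f x = 1 / Gamma α * rightVolterra b (fun s => s ^ (α - 1)) f x :=
  rfl

theorem caputoLeft_eq_leftRLI (a α : ℝ) (f : ℝ → ℝ) :
    caputoLeft a α f = leftRLI a (1 - α) (deriv f) := by
  funext x
  rw [caputoLeft, leftRLI, sub_sub_cancel_left]

theorem absolutelyContinuousOnInterval_rightRLI (hab : a ≤ b) (hα : 0 < α)
    (hg : AbsolutelyContinuousOnInterval g a b) :
    AbsolutelyContinuousOnInterval (rightRLI b α g) a b :=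
  (absolutelyContinuousOnInterval_rightVolterra hab
    (intervalIntegral.intervalIntegrable_rpow' (by linarith)) hg).const_mul _

theorem integral_mul_leftRLI (hab : a ≤ b) (hα : 0 < α) (hf : IntervalIntegrable f volume a b)
    (hg : MemLp g ⊤ (volume.restrict (Ioc a b))) :
    ∫ x in a..b, g x * leftRLI a α f x = ∫ x in a..b, f x * rightRLI b α g x := by
  have hswap := integral_mul_leftVolterra hab
    (intervalIntegral.intervalIntegrable_rpow' (r := α - 1) (by linarith)) hf hg
  simp_rw [leftRLI_eq_leftVolterra, rightRLI_eq_rightVolterra, mul_left_comm _ (1 / Gamma α),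
    intervalIntegral.integral_const_mul, hswap]

theorem caputo_left_integration_by_parts_general (hab : a ≤ b) (hα1 : α < 1)
    (hf : AbsolutelyContinuousOnInterval f a b) (hg : MemLp g ⊤ (volume.restrict (Ioc a b)))
    (hI : AbsolutelyContinuousOnInterval (rightRLI b (1 - α) g) a b) :
    ∫ x in a..b, g x * caputoLeft a α f x =
      (f b * rightRLI b (1 - α) g b - f a * rightRLI b (1 - α) g a) +
        ∫ x in a..b, f x * rlRightD b α g x := by
  have hparts := hf.integral_mul_deriv_eq_deriv_mul hI
  rw [caputoLeft_eq_leftRLI,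
    integral_mul_leftRLI hab (sub_pos.2 hα1) hf.intervalIntegrable_deriv hg]
  simp_rw [rlRightD, mul_neg, intervalIntegral.integral_neg, hparts]
  ring

end Fractional

/-- Fractional integration by parts for the left Caputo derivative:
`∫_a^b g (ᶜₐDₓ^α f) dx = [f · ₓI_b^{1-α} g]_a^b + ∫_a^b f (ₓD_b^α g) dx`. -/
theorem caputo_left_integration_by_parts
    (a b α : ℝ) (hab : a < b) (hα0 : 0 < α) (hα1 : α < 1)
    (f g : ℝ → ℝ)
    (hf : AbsolutelyContinuousOn f a b) (hg : AbsolutelyContinuousOn g a b) :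
    ∫ x in a..b, g x * caputoLeft a α f x =
      (f b * rightRLI b (1 - α) g b - f a * rightRLI b (1 - α) g a) +
        ∫ x in a..b, f x * rlRightD b α g x := by
  have hf' := hf.absolutelyContinuousOnInterval hab.le
  have hg' := hg.absolutelyContinuousOnInterval hab.le
  exact caputo_left_integration_by_parts_general hab.le hα1 hf'
    ((memLp_top_restrict_of_continuousOn isCompact_uIcc hg'.continuousOn).mono_measure
      (Measure.restrict_mono (Ioc_subset_Icc_self.trans Icc_subset_uIcc) le_rfl))
    (absolutelyContinuousOnInterval_rightRLI hab.le (sub_pos.2 hα1) hg')
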